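/- arXiv:2008.06197 — 2 statements merged into one kernel-verified Lean document; each statement's English description precedes it below -/
import Mathlib

section
/- Let d ≥ 1, σ > 0, and x, x' ∈ ℝ^d. Let ω be distributed on ℝ^d with coordinates i.i.d. real Gaussian with mean 0 and variance 1/σ², and independently let b be uniform on [0, 2π]. Then E[ 2 cos(⟨ω, x⟩ + b) · cos(⟨ω, x'⟩ + b) ] = exp(−‖x − x'‖² / (2σ²)). -/
/-!
Averaging over the phase `b` kills the `cos (u + v + 2b)` half of the product-to-sum formula
`2 cos (u + b) cos (v + b) = cos (u - v) + cos (u + v + 2b)`, leaving `cos ⟨ω, x - x'⟩`. The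
expectation of this cosine is the real part of the characteristic function of the Gaussian
spectral measure at `x - x'`, which factors over coordinates.
-/

open MeasureTheory ProbabilityTheory

lemma integral_two_mul_cos_mul_cos (u v : ℝ) :
    ∫ b in (0 : ℝ)..(2 * Real.pi), 2 * Real.cos (u + b) * Real.cos (v + b)
      = 2 * Real.pi * Real.cos (u - v) := by
  have hderiv : ∀ b ∈ Set.uIcc (0 : ℝ) (2 * Real.pi),
      HasDerivAt (fun b : ℝ => Real.cos (u - v) * b + Real.sin (u + v + 2 * b) / 2)
        (2 * Real.cos (u + b) * Real.cos (v + b)) b := by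
    intro b _
    have h1 : HasDerivAt (fun b : ℝ => u + v + 2 * b) 2 b := by
      simpa using ((hasDerivAt_id b).const_mul 2).const_add (u + v)
    have h2 := ((hasDerivAt_id b).const_mul (Real.cos (u - v))).add (h1.sin.div_const 2)
    have e : 2 * Real.cos (u + b) * Real.cos (v + b)
        = Real.cos (u - v) * 1 + Real.cos (u + v + 2 * b) * 2 / 2 := by
      rw [Real.two_mul_cos_mul_cos, show u + b - (v + b) = u - v by ring,
        show u + b + (v + b) = u + v + 2 * b by ring]
      ring
    rw [e]
    exact h2
  rw [intervalIntegral.integral_eq_sub_of_hasDerivAt hderiv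
    (Continuous.intervalIntegrable (by fun_prop) _ _)]
  have hper : Real.sin (u + v + 2 * (2 * Real.pi)) = Real.sin (u + v) := by
    simpa using Real.sin_add_nat_mul_two_pi (u + v) 2
  rw [hper]
  simp
  ring

/-- The characteristic function of a product of centred Gaussians, in the coordinates of
`ι → ℝ`. -/
lemma integral_cexp_pi_gaussianReal {ι : Type*} [Fintype ι] (v : NNReal) (t : ι → ℝ) :
    ∫ ω : ι → ℝ, Complex.exp (((∑ i, ω i * t i : ℝ) : ℂ) * Complex.I)
        ∂(Measure.pi fun _ : ι => gaussianReal 0 v)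
      = ((Real.exp (-(v * ∑ i, t i ^ 2) / 2) : ℝ) : ℂ) := by
  have hprod : ∀ ω : ι → ℝ, Complex.exp (((∑ i, ω i * t i : ℝ) : ℂ) * Complex.I)
      = ∏ i, Complex.exp ((t i : ℂ) * (ω i : ℂ) * Complex.I) := by
    intro ω
    rw [← Complex.exp_sum, ← Finset.sum_mul]
    push_cast
    simp_rw [mul_comm]
  simp_rw [hprod]
  rw [integral_fintype_prod_eq_prod
    (fun (i : ι) (y : ℝ) => Complex.exp ((t i : ℂ) * (y : ℂ) * Complex.I))]
  simp_rw [← charFun_apply_real, charFun_gaussianReal]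
  rw [← Complex.exp_sum, Complex.ofReal_exp]
  congr 1
  push_cast
  simp only [mul_zero, zero_mul, zero_sub, Finset.mul_sum, Finset.sum_div,
    ← neg_div, ← Finset.sum_neg_distrib]

lemma integral_cos_pi_gaussianReal {ι : Type*} [Fintype ι] (v : NNReal) (t : ι → ℝ) :
    ∫ ω : ι → ℝ, Real.cos (∑ i, ω i * t i) ∂(Measure.pi fun _ : ι => gaussianReal 0 v)
      = Real.exp (-(v * ∑ i, t i ^ 2) / 2) := by
  have hint : Integrable (fun ω : ι → ℝ =>
      Complex.exp (((∑ i, ω i * t i : ℝ) : ℂ) * Complex.I))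
      (Measure.pi fun _ : ι => gaussianReal 0 v) := by
    refine Integrable.of_bound (C := 1)
      (Continuous.aestronglyMeasurable (by fun_prop)) (ae_of_all _ fun ω => ?_)
    rw [Complex.norm_exp_ofReal_mul_I]
  have h := integral_re hint
  simp only [RCLike.re_to_complex, Complex.exp_ofReal_mul_I_re] at h
  rw [h, integral_cexp_pi_gaussianReal, Complex.ofReal_re]

/-- **Unbiasedness of random Fourier features for the Gaussian RBF kernel.**
With `ω` having i.i.d. `N(0, 1/σ²)` coordinates and, independently, `b` uniform on
`[0, 2π]`, `E[2 cos(⟨ω,x⟩+b) cos(⟨ω,x'⟩+b)] = exp(−‖x − x'‖²/(2σ²))`. -/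
theorem stmt_3 (d : ℕ) (hd : 1 ≤ d) (σ : ℝ) (hσ : 0 < σ) (x x' : Fin d → ℝ) :
    (∫ ω : Fin d → ℝ,
        ((1 / (2 * Real.pi)) *
          ∫ b in (0 : ℝ)..(2 * Real.pi),
            2 * Real.cos ((∑ i, ω i * x i) + b) * Real.cos ((∑ i, ω i * x' i) + b))
        ∂(Measure.pi fun _ : Fin d => gaussianReal 0 (Real.toNNReal (1 / σ ^ 2))))
      = Real.exp (-(∑ i, (x i - x' i) ^ 2) / (2 * σ ^ 2)) := by
  have hinner : ∀ ω : Fin d → ℝ, ((1 / (2 * Real.pi)) *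
      ∫ b in (0 : ℝ)..(2 * Real.pi),
        2 * Real.cos ((∑ i, ω i * x i) + b) * Real.cos ((∑ i, ω i * x' i) + b))
      = Real.cos (∑ i, ω i * (x i - x' i)) := by
    intro ω
    rw [integral_two_mul_cos_mul_cos, ← Finset.sum_sub_distrib]
    simp_rw [← mul_sub]
    field_simp
  simp_rw [hinner]
  rw [integral_cos_pi_gaussianReal, Real.coe_toNNReal _ (by positivity)]
  congr 1
  field_simp
end

section
/- Let λ > 0, κ > 0, M ≥ 0, φ ≥ 0, B > 0, ε > 0, ϑ ∈ (0, 1], and set γ = εϑ/(8κB); assume γλ ≤ 1 and γ ≤ ελ / (4 M² (√κ + √φ)²). Let (a_t)_{t ≥ 1} be a sequence of nonnegative reals with a_t ≤ M²(√κ + √φ)² γ / λ for all t, and let (e_t)_{t ≥ 1} be a sequence of nonnegative reals such that for some e_∞ with 0 ≤ e_∞ ≤ γB and some e₁ > 0, e_{t+1} ≤ (1 − γλ)^t (e₁ − e_∞) + e_∞ for all t ≥ 1. Then for every natural number t ≥ 1 with t ≥ 8κB log(8κ e₁ / ε) / (ϑ ε λ), one has 2 a_{t+1} + 2 κ e_{t+1}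 ≤ ε. -/
/-!
Each half of the error is at most `ε / 2`. The random-feature half follows from the second
bound on `γ`. In the optimization half, the fixed point `einf ≤ γ B = ε ϑ / (8 κ)` contributes
at most `ε / 4`, and the transient `(1 - γ λ) ^ t * e₁ ≤ exp (-γ λ t) * e₁` also contributes at
most `ε / 4`, because the lower bound on `t` says exactly that `γ λ t ≥ log (8 κ e₁ / ε)`.
-/

/-- **Deterministic rendering of Theorem 2 of the paper (convergence in expectation of
FDSKL with constant learning rate).**
With `γ = εϑ/(8κB)`, `γλ ≤ 1`, `γ ≤ ελ/(4M²(√κ+√φ)²)`, random-feature errors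
`a_t ≤ M²(√κ+√φ)²γ/λ`, and `e` satisfying the unwrapped contraction bound with fixed
point `0 ≤ e_∞ ≤ γB`, one has `2a_{t+1} + 2κ e_{t+1} ≤ ε` for every `t ≥ 1` with
`t ≥ 8κB log(8κe₁/ε)/(ϑελ)`. -/
theorem stmt_18 (lam κ M φ B ε ϑ γ : ℝ)
    (hlam : 0 < lam) (hκ : 0 < κ) (hM : 0 ≤ M) (hφ : 0 ≤ φ) (hB : 0 < B)
    (hε : 0 < ε) (hϑ0 : 0 < ϑ) (hϑ1 : ϑ ≤ 1)
    (hγ : γ = ε * ϑ / (8 * κ * B)) (hgl : γ * lam ≤ 1)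
    (hγ2 : γ ≤ ε * lam / (4 * M ^ 2 * (Real.sqrt κ + Real.sqrt φ) ^ 2))
    (a : ℕ → ℝ) (ha0 : ∀ t, 1 ≤ t → 0 ≤ a t)
    (haB : ∀ t, 1 ≤ t → a t ≤ M ^ 2 * (Real.sqrt κ + Real.sqrt φ) ^ 2 * γ / lam)
    (e : ℕ → ℝ) (he0 : ∀ t, 1 ≤ t → 0 ≤ e t)
    (einf : ℝ) (heinf0 : 0 ≤ einf) (heinfB : einf ≤ γ * B)
    (e₁ : ℝ) (he₁ : 0 < e₁)
    (hrec : ∀ t, 1 ≤ t → e (t + 1) ≤ (1 - γ * lam) ^ t * (e₁ - einf) + einf) :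
    ∀ t : ℕ, 1 ≤ t →
      8 * κ * B * Real.log (8 * κ * e₁ / ε) / (ϑ * ε * lam) ≤ (t : ℝ) →
      2 * a (t + 1) + 2 * κ * e (t + 1) ≤ ε := by
  intro t ht htl
  have h1 : a (t + 1) ≤ ε / 4 := by
    refine (haB (t + 1) (by omega)).trans ?_
    rw [div_le_iff₀ hlam]
    have hC : 0 ≤ M ^ 2 * (Real.sqrt κ + Real.sqrt φ) ^ 2 := by positivity
    rw [mul_assoc 4] at hγ2
    generalize M ^ 2 * (Real.sqrt κ + Real.sqrt φ) ^ 2 = C at hC hγ2 ⊢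
    rcases hC.eq_or_lt with h | h
    -- For `C = 0` the bound on `γ` is a division by zero, but the feature error vanishes anyway.
    · subst h
      have : 0 ≤ ε / 4 * lam := by positivity
      simpa using this
    · rw [le_div_iff₀ (by positivity)] at hγ2
      linarith
  have h2 : κ * einf ≤ ε / 8 := by
    have hγB : κ * (γ * B) = ε * ϑ / 8 := by
      rw [hγ]
      field_simp
    have := mul_le_mul_of_nonneg_left heinfB hκ.le
    have := mul_le_mul_of_nonneg_left hϑ1 hε.le
    linarith
  have hlog : Real.log (8 * κ * e₁ / ε) ≤ γ * lam * t := by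
    rw [div_le_iff₀ (by positivity)] at htl
    have : γ * lam * t = t * (ϑ * ε * lam) / (8 * κ * B) := by
      rw [hγ]
      ring
    rw [this, le_div_iff₀ (by positivity)]
    linarith
  have hq : 0 ≤ 1 - γ * lam := by linarith
  have hexp : (1 - γ * lam) ^ t ≤ ε / (8 * κ * e₁) := by
    calc (1 - γ * lam) ^ t ≤ Real.exp (-(γ * lam)) ^ t :=
          pow_le_pow_left₀ hq (Real.one_sub_le_exp_neg _) t
      _ = Real.exp (-(γ * lam * t)) := by
          rw [← Real.exp_nat_mul]
          congr 1
          ring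
      _ ≤ Real.exp (-Real.log (8 * κ * e₁ / ε)) := Real.exp_le_exp.mpr (neg_le_neg hlog)
      _ = ε / (8 * κ * e₁) := by
          rw [Real.exp_neg, Real.exp_log (by positivity), inv_div]
  have h3 : (1 - γ * lam) ^ t * (κ * e₁) ≤ ε / 8 := by
    rw [le_div_iff₀ (by positivity)] at hexp
    linarith
  have h4 := mul_le_mul_of_nonneg_left (hrec t ht) hκ.le
  have h5 : 0 ≤ (1 - γ * lam) ^ t * (κ * einf) := by positivity
  have h6 : κ * ((1 - γ * lam) ^ t * (e₁ - einf) + einf)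
      = (1 - γ * lam) ^ t * (κ * e₁) - (1 - γ * lam) ^ t * (κ * einf) + κ * einf := by ring
  linarith
end
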